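/- For every integer n ≥ 5 one has vrad(NN_Q~) ≥ 1/(√2 · n). -/

import Mathlib

open MeasureTheory Finset

noncomputable section

/-- The space `Q` of even quartics, represented by symmetric coefficient matrices
`a : Fin n → Fin n → ℝ` (the quartic being `∑ i j, a i j * x i ^ 2 * x j ^ 2`). -/
def symSub (n : ℕ) : Submodule ℝ (Fin n → Fin n → ℝ) where
  carrier := {a | ∀ i j, a i j = a j i}
  add_mem' := by
    intro a b ha hb i j
    simp only [Pi.add_apply, ha i j, hb i j]
  zero_mem' := by intro i j; rfl
  smul_mem' := by
    intro c a ha i j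
    simp only [Pi.smul_apply, smul_eq_mul, ha i j]

/-- The even quartic form corresponding to a symmetric coefficient matrix. -/
def qfun {n : ℕ} (a : symSub n) (x : EuclideanSpace ℝ (Fin n)) : ℝ :=
  ∑ i, ∑ j, a.1 i j * (x i)^2 * (x j)^2

/-- The element of `Q` corresponding to `r(x) = (x_1^2 + ... + x_n^2)^2`. -/
def rQ (n : ℕ) : symSub n := ⟨fun _ _ => 1, fun _ _ => rfl⟩

/-- The section `K~ = {f ∈ M : f + r ∈ K}` of a cone `K ⊆ Q`. -/
def sect {n : ℕ} (σ : Measure (EuclideanSpace ℝ (Fin n))) (K : Set (symSub n)) :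
    Set (symSub n) :=
  {a | (∫ x, qfun a x ∂σ) = 0 ∧ a + rQ n ∈ K}

/-- The volume radius of a subset of `M`, computed through a linear isometry `ψ`
of `ℝ^(dim M)` (with Lebesgue measure) onto `M`. -/
def vrad {n d : ℕ} (ψ : EuclideanSpace ℝ (Fin d) →ₗ[ℝ] symSub n)
    (C : Set (symSub n)) : ℝ :=
  ((volume (⇑ψ ⁻¹' C)).toReal /
    (volume (Metric.closedBall (0 : EuclideanSpace ℝ (Fin d)) 1)).toReal) ^ ((1:ℝ)/(d:ℝ))

/-- `NN_Q`: even quartics with nonnegative coefficients. -/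
def NNQ (n : ℕ) : Set (symSub n) :=
  {a | ∀ i j, 0 ≤ a.1 i j}

/-!
The moments of `x_1², …, x_n²` on the sphere obey the recursion of Pólya's urn. They show that,
after a suitable rescaling of the coefficients, the `L²` norm of a quartic is at least the Euclidean
norm of its coefficient vector, so passing to coefficients does not increase volume. Now
`exp (-∫ f dσ)` is integrated over the cone of quartics with nonnegative coefficients: with respect
to the `L²` volume, slicing by the mean gives `d!` times the volume of the section, where
`d = dim M`; with respect to the volume of the coefficients, it gives an explicit product, which is
therefore a lower bound. Duplication of the Gamma function turns this into a bound relative to the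
volume of the unit ball.
-/

section VolumeBounds

lemma factorial_le_half_succ_pow (d : ℕ) : (d.factorial : ℝ) ≤ ((d + 1) / 2) ^ d := by
  induction d with
  | zero => simp
  | succ d ih =>
    have hbernoulli : 2 ≤ (1 + 1 / (d + 1 : ℝ)) ^ (d + 1) := by
      have hpos : (0 : ℝ) ≤ 1 / (d + 1) := by positivity
      refine le_trans (le_of_eq ?_) (one_add_mul_le_pow (by linarith) (d + 1))
      push_cast
      field_simp
      norm_num
    calc ((d + 1).factorial : ℝ) = (d + 1) * d.factorial := by
          rw [Nat.factorial_succ]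
          push_cast
          rfl
      _ ≤ (d + 1) * ((d + 1) / 2) ^ d := by gcongr
      _ = ((d + 1) / 2) ^ (d + 1) * 2 := by ring
      _ ≤ ((d + 1) / 2) ^ (d + 1) * (1 + 1 / (d + 1)) ^ (d + 1) := by gcongr
      _ = (((d + 1 : ℕ) + 1) / 2) ^ (d + 1) := by
          rw [← mul_pow]
          push_cast
          field_simp

lemma factorial_le_Gamma_sq_mul_two_pow {d : ℕ} (hd : 3 ≤ d) :
    (d.factorial : ℝ) ≤ Real.Gamma (d / 2 + 1) ^ 2 * 2 ^ d := by
  have hd' : (3 : ℝ) ≤ d := by exact_mod_cast hd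
  have hduplication : Real.Gamma (d / 2 + 1 / 2) * Real.Gamma (d / 2 + 1) * 2 ^ d =
      d.factorial * √Real.pi := by
    have h := Real.Gamma_mul_Gamma_add_half ((d : ℝ) / 2 + 1 / 2)
    rw [show (d : ℝ) / 2 + 1 / 2 + 1 / 2 = d / 2 + 1 by ring,
      show 2 * ((d : ℝ) / 2 + 1 / 2) = d + 1 by ring, Real.Gamma_nat_eq_factorial,
      show (1 : ℝ) - (d + 1) = -d by ring, Real.rpow_neg zero_le_two, Real.rpow_natCast] at h
    rw [h]
    field_simp
  have hmono : Real.Gamma (d / 2 + 1 / 2) ≤ Real.Gamma (d / 2 + 1) :=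
    Real.Gamma_strictMonoOn_Ici.monotoneOn (Set.mem_Ici.2 (by linarith))
      (Set.mem_Ici.2 (by linarith)) (by linarith)
  have : 0 < Real.Gamma ((d : ℝ) / 2 + 1) := Real.Gamma_pos_of_pos (by positivity)
  have hpi : 1 ≤ √Real.pi := Real.one_le_sqrt.2 (by linarith [Real.pi_gt_three])
  calc (d.factorial : ℝ) ≤ d.factorial * √Real.pi := le_mul_of_one_le_right (by positivity) hpi
    _ = Real.Gamma (d / 2 + 1 / 2) * Real.Gamma (d / 2 + 1) * 2 ^ d := hduplication.symm
    _ ≤ Real.Gamma (d / 2 + 1) ^ 2 * 2 ^ d := by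
        rw [sq]
        gcongr

lemma volume_real_closedBall_sq_mul_factorial_le {d : ℕ} (hd : 3 ≤ d) :
    volume.real (Metric.closedBall (0 : EuclideanSpace ℝ (Fin d)) 1) ^ 2 * d.factorial ≤
      (2 * Real.pi) ^ d := by
  have : Nonempty (Fin d) := ⟨⟨0, by lia⟩⟩
  have : 0 < Real.Gamma ((d : ℝ) / 2 + 1) := Real.Gamma_pos_of_pos (by positivity)
  have hvol : volume.real (Metric.closedBall (0 : EuclideanSpace ℝ (Fin d)) 1) =
      √Real.pi ^ d / Real.Gamma (d / 2 + 1) := by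
    simp only [Measure.real, EuclideanSpace.volume_closedBall, ENNReal.ofReal_one, one_pow,
      one_mul, Fintype.card_fin]
    exact ENNReal.toReal_ofReal (by positivity)
  calc _ = Real.pi ^ d * (d.factorial / Real.Gamma (d / 2 + 1) ^ 2) := by
        rw [hvol, div_pow, pow_right_comm, Real.sq_sqrt Real.pi_pos.le]
        ring
    _ ≤ Real.pi ^ d * 2 ^ d := by
        gcongr
        rw [div_le_iff₀' (by positivity)]
        exact factorial_le_Gamma_sq_mul_two_pow hd
    _ = (2 * Real.pi) ^ d := by ring

lemma one_div_pow_mul_volume_real_closedBall_le {d : ℕ} (hd : 3 ≤ d) {c P V : ℝ} (hc : 0 < c)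
    (hP : 0 ≤ P) (hV : 0 ≤ V) (hcP : Real.pi ^ d * d.factorial ≤ P ^ 2 * (c ^ 2) ^ d)
    (hPV : P ≤ d.factorial * V) :
    (1 / (√2 * c)) ^ d * volume.real (Metric.closedBall (0 : EuclideanSpace ℝ (Fin d)) 1) ≤ V := by
  let B := volume.real (Metric.closedBall (0 : EuclideanSpace ℝ (Fin d)) 1)
  have hscale : ((1 / (√2 * c)) ^ d) ^ 2 * (2 ^ d * (c ^ 2) ^ d) = 1 := by
    rw [pow_right_comm, div_pow, mul_pow, Real.sq_sqrt zero_le_two, ← mul_pow, ← mul_pow,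
      one_pow, one_div_mul_cancel (by positivity), one_pow]
  have hB : B ^ 2 * d.factorial ^ 2 ≤ V ^ 2 * d.factorial ^ 2 * (2 ^ d * (c ^ 2) ^ d) :=
    calc B ^ 2 * d.factorial ^ 2 = B ^ 2 * d.factorial * d.factorial := by ring
      _ ≤ (2 * Real.pi) ^ d * d.factorial := by
          gcongr
          exact volume_real_closedBall_sq_mul_factorial_le hd
      _ = 2 ^ d * (Real.pi ^ d * d.factorial) := by ring
      _ ≤ 2 ^ d * ((d.factorial * V) ^ 2 * (c ^ 2) ^ d) :=
          mul_le_mul_of_nonneg_left (hcP.trans (by gcongr)) (by positivity)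
      _ = _ := by ring
  refine le_of_sq_le_sq (le_of_mul_le_mul_right ?_ (by positivity : 0 < (d.factorial : ℝ) ^ 2)) hV
  calc ((1 / (√2 * c)) ^ d * B) ^ 2 * d.factorial ^ 2
      = ((1 / (√2 * c)) ^ d) ^ 2 * (B ^ 2 * d.factorial ^ 2) := by ring
    _ ≤ ((1 / (√2 * c)) ^ d) ^ 2 * (V ^ 2 * d.factorial ^ 2 * (2 ^ d * (c ^ 2) ^ d)) := by gcongr
    _ = V ^ 2 * d.factorial ^ 2 := by linear_combination V ^ 2 * d.factorial ^ 2 * hscale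

lemma pi_pow_mul_factorial_le {n d : ℕ} (hn : 5 ≤ n) (hd : 2 * (d + 1) = n * (n + 1)) :
    Real.pi ^ d * d.factorial ≤
      (2 / 3) ^ n * (4 * (n * (n + 2) / ((n + 4) * (n + 6)))) ^ (d + 1) * ((n : ℝ) ^ 2) ^ d := by
  have hn' : (5 : ℝ) ≤ n := by exact_mod_cast hn
  set ρ : ℝ := n * (n + 2) / ((n + 4) * (n + 6)) with hρ_def
  have hρ : 35 / 99 ≤ ρ := by
    rw [hρ_def, div_le_div_iff₀ (by norm_num) (by positivity)]
    nlinarith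
  have hhalf : ((d : ℝ) + 1) / 2 = n * (n + 1) / 4 := by
    have : (2 : ℝ) * (d + 1) = n * (n + 1) := by exact_mod_cast hd
    linarith
  have hbase : 5 / 4 * (Real.pi * (n * (n + 1) / 4)) ≤ 4 * ρ * n ^ 2 :=
    calc 5 / 4 * (Real.pi * (n * (n + 1) / 4)) ≤ 5 / 4 * (3.15 * (n * (n + 1) / 4)) := by
          gcongr
          exact Real.pi_lt_d2.le
      _ ≤ 4 * (35 / 99) * n ^ 2 := by nlinarith
      _ ≤ 4 * ρ * n ^ 2 := by gcongr
  have hpow : (3 / 2 : ℝ) ^ n ≤ (5 / 4) ^ d :=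
    calc (3 / 2 : ℝ) ^ n ≤ ((5 / 4) ^ 2) ^ n := by gcongr; norm_num
      _ = (5 / 4) ^ (2 * n) := by rw [pow_mul]
      _ ≤ (5 / 4) ^ d := pow_le_pow_right₀ (by norm_num) (by nlinarith)
  calc Real.pi ^ d * d.factorial ≤ Real.pi ^ d * (n * (n + 1) / 4) ^ d := by
        rw [← hhalf]
        gcongr
        exact factorial_le_half_succ_pow d
    _ = (2 / 3) ^ n * (3 / 2) ^ n * (Real.pi * (n * (n + 1) / 4)) ^ d := by
        rw [← mul_pow, ← mul_pow]
        norm_num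
    _ ≤ (2 / 3) ^ n * (5 / 4) ^ d * (Real.pi * (n * (n + 1) / 4)) ^ d := by gcongr
    _ = (2 / 3) ^ n * 1 * (5 / 4 * (Real.pi * (n * (n + 1) / 4))) ^ d := by
        rw [mul_pow (5 / 4)]
        ring
    _ ≤ (2 / 3) ^ n * (4 * ρ) * (4 * ρ * n ^ 2) ^ d := by
        gcongr
        linarith
    _ = _ := by
        rw [mul_pow, pow_succ]
        ring

lemma le_vrad {n d : ℕ} {ψ : EuclideanSpace ℝ (Fin d) →ₗ[ℝ] symSub n} {C : Set (symSub n)} {c : ℝ}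
    (hd : d ≠ 0) (hc : 0 ≤ c)
    (h : c ^ d * volume.real (Metric.closedBall (0 : EuclideanSpace ℝ (Fin d)) 1) ≤
      volume.real (ψ ⁻¹' C)) : c ≤ vrad ψ C := by
  have hball : 0 < volume.real (Metric.closedBall (0 : EuclideanSpace ℝ (Fin d)) 1) :=
    ENNReal.toReal_pos (Metric.measure_closedBall_pos volume 0 one_pos).ne'
      measure_closedBall_lt_top.ne
  calc c = (c ^ d) ^ (1 / (d : ℝ)) := by rw [one_div, Real.pow_rpow_inv_natCast hc hd]
    _ ≤ vrad ψ C := by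
        unfold vrad
        gcongr
        exact (le_div_iff₀ hball).2 h

end VolumeBounds

section Geometry

open Module
open scoped Pointwise

lemma volume_le_map_of_lipschitzWith_one {E F : Type*}
    [NormedAddCommGroup E] [InnerProductSpace ℝ E] [FiniteDimensional ℝ E] [MeasurableSpace E]
    [BorelSpace E] [NormedAddCommGroup F] [InnerProductSpace ℝ F] [FiniteDimensional ℝ F]
    [MeasurableSpace F] [BorelSpace F] (hEF : finrank ℝ E = finrank ℝ F) {f : E → F}
    (hf : LipschitzWith 1 f) (hsurj : Function.Surjective f) :
    (volume : Measure F) ≤ volume.map f := by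
  refine Measure.le_iff.2 fun s hs ↦ ?_
  rw [Measure.map_apply hf.continuous.measurable hs]
  nth_rw 1 [← Set.image_preimage_eq s hsurj]
  rw [← InnerProductSpace.euclideanHausdorffMeasure_eq_volume (V := E),
    ← InnerProductSpace.euclideanHausdorffMeasure_eq_volume (V := F), hEF]
  simp only [Measure.euclideanHausdorffMeasure_def, Measure.smul_apply]
  gcongr
  simpa using hf.hausdorffMeasure_image_le (Nat.cast_nonneg (finrank ℝ F)) (f ⁻¹' s)

lemma lintegral_Ioi_exp_neg_mul_pow (d : ℕ) :
    ∫⁻ t in Set.Ioi (0 : ℝ), ENNReal.ofReal (Real.exp (-t)) * ENNReal.ofReal (t ^ d) =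
      d.factorial := by
  have hΓ := Real.Gamma_eq_integral (s := d + 1) (by positivity)
  have hint := Real.GammaIntegral_convergent (s := d + 1) (by positivity)
  simp only [Real.Gamma_nat_eq_factorial, add_sub_cancel_right, Real.rpow_natCast] at hΓ hint
  have hnonneg : 0 ≤ᵐ[volume.restrict (Set.Ioi 0)] fun t : ℝ ↦ Real.exp (-t) * t ^ d :=
    (ae_restrict_mem measurableSet_Ioi).mono fun t ht ↦
      mul_nonneg (Real.exp_pos _).le (pow_nonneg (Set.mem_Ioi.1 ht).le d)
  rw [← ENNReal.ofReal_natCast, hΓ, ofReal_integral_eq_lintegral_ofReal hint hnonneg]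
  simp only [ENNReal.ofReal_mul (Real.exp_pos _).le]

theorem setLIntegral_exp_neg_snd_cone {E : Type*} [NormedAddCommGroup E] [NormedSpace ℝ E]
    [FiniteDimensional ℝ E] [MeasurableSpace E] [BorelSpace E] (μ : Measure E)
    [μ.IsAddHaarMeasure] {K : Set (E × ℝ)} (hK : MeasurableSet K) (hK_snd : ∀ x ∈ K, 0 ≤ x.2)
    (hK_smul : ∀ t : ℝ, 0 < t → ∀ x ∈ K, t • x ∈ K) :
    ∫⁻ x in K, ENNReal.ofReal (Real.exp (-x.2)) ∂μ.prod volume =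
      (finrank ℝ E).factorial * μ {u | (u, 1) ∈ K} := by
  have hslice {t : ℝ} (ht : 0 < t) : {u | (u, t) ∈ K} = t • {u | (u, 1) ∈ K} := by
    ext u
    rw [Set.mem_smul_set_iff_inv_smul_mem₀ ht.ne']
    refine ⟨fun hu ↦ ?_, fun hu ↦ ?_⟩
    · simpa [ht.ne'] using hK_smul t⁻¹ (inv_pos.2 ht) _ hu
    · simpa [ht.ne'] using hK_smul t ht _ hu
  have hneg {t : ℝ} (ht : t < 0) : {u | (u, t) ∈ K} = ∅ :=
    Set.eq_empty_of_forall_notMem fun u hu ↦ ht.not_ge (hK_snd _ hu)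
  have hfiber (t : ℝ) : ∫⁻ u, K.indicator (fun x ↦ ENNReal.ofReal (Real.exp (-x.2))) (u, t) ∂μ =
      ENNReal.ofReal (Real.exp (-t)) * μ {u | (u, t) ∈ K} :=
    lintegral_indicator_const (measurable_prodMk_right hK) (ENNReal.ofReal (Real.exp (-t)))
  calc _ = ∫⁻ t, ENNReal.ofReal (Real.exp (-t)) * μ {u | (u, t) ∈ K} := by
        rw [← lintegral_indicator hK, lintegral_prod_symm' _ (by fun_prop (disch := exact hK))]
        exact lintegral_congr hfiber
    _ = ∫⁻ t in Set.Ioi (0 : ℝ), ENNReal.ofReal (Real.exp (-t)) * μ {u | (u, t) ∈ K} := by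
        rw [setLIntegral_congr Ioi_ae_eq_Ici, ← lintegral_indicator measurableSet_Ici,
          Set.indicator_eq_self.2]
        exact Function.support_subset_iff'.2 fun t ht ↦ by simp [hneg (not_le.1 ht)]
    _ = ∫⁻ t in Set.Ioi (0 : ℝ), ENNReal.ofReal (Real.exp (-t)) *
          ENNReal.ofReal (t ^ finrank ℝ E) * μ {u | (u, 1) ∈ K} := by
        refine setLIntegral_congr_fun measurableSet_Ioi fun t ht ↦ ?_
        simp only [hslice ht, Measure.addHaar_smul, abs_of_pos (pow_pos (Set.mem_Ioi.1 ht) _),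
          mul_assoc]
    _ = _ := by
        rw [lintegral_mul_const _ (by fun_prop), lintegral_Ioi_exp_neg_mul_pow]

lemma setLIntegral_Ici_exp_neg_sum {ι : Type*} [Fintype ι] {w : ι → ℝ} (hw : ∀ k, 0 < w k) :
    ∫⁻ y in Set.Ici (0 : ι → ℝ), ENNReal.ofReal (Real.exp (-∑ k, w k * y k)) =
      ENNReal.ofReal (∏ k, (w k)⁻¹) := by
  have hint (k : ι) : IntegrableOn (fun t ↦ Real.exp (-(w k) * t)) (Set.Ici 0) := by
    rw [integrableOn_Ici_iff_integrableOn_Ioi]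
    exact integrableOn_exp_mul_Ioi (neg_lt_zero.2 (hw k)) 0
  have hprod (y : ι → ℝ) : Real.exp (-∑ k, w k * y k) = ∏ k, Real.exp (-(w k) * y k) := by
    rw [← Real.exp_sum]
    simp only [neg_mul, Finset.sum_neg_distrib]
  have hset : Set.Ici (0 : ι → ℝ) = Set.univ.pi fun _ ↦ Set.Ici 0 := by
    rw [Set.pi_univ_Ici]; rfl
  rw [hset, volume_pi, Measure.restrict_pi_pi]
  simp only [hprod]
  rw [← ofReal_integral_eq_lintegral_ofReal (.fintype_prod hint)
    (.of_forall fun y ↦ prod_nonneg fun k _ ↦ (Real.exp_pos _).le),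
    integral_fintype_prod_eq_prod fun k t ↦ Real.exp (-(w k) * t)]
  congr! with k
  rw [integral_Ici_eq_integral_Ioi, integral_exp_mul_Ioi (neg_lt_zero.2 (hw k))]
  simp

variable {E ι : Type*} [NormedAddCommGroup E] [InnerProductSpace ℝ E] [FiniteDimensional ℝ E]
  [Fintype ι] {L : WithLp 2 (E × ℝ) →ₗ[ℝ] EuclideanSpace ℝ ι} {w : ι → ℝ}

lemma isBounded_slice (hinj : Function.Injective L) (hw : ∀ k, 0 < w k)
    (hwL : ∀ x, ∑ k, w k * L x k = x.snd) :
    Bornology.IsBounded {u | ∀ k, 0 ≤ L (WithLp.toLp 2 (u, 1)) k} := by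
  obtain ⟨c, -, hc⟩ := L.exists_antilipschitzWith (LinearMap.ker_eq_bot.2 hinj)
  let T : Set (EuclideanSpace ℝ ι) := WithLp.toLp 2 '' Set.Icc 0 w⁻¹
  have hT : Bornology.IsBounded T :=
    (isCompact_Icc.image (PiLp.continuous_toLp 2 _)).isBounded
  have hmem (u : E) (hu : ∀ k, 0 ≤ L (WithLp.toLp 2 (u, 1)) k) : L (WithLp.toLp 2 (u, 1)) ∈ T := by
    refine ⟨_, ⟨hu, fun k ↦ ?_⟩, rfl⟩
    rw [Pi.inv_apply, ← mul_one (w k)⁻¹, le_inv_mul_iff₀ (hw k)]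
    calc w k * L (WithLp.toLp 2 (u, 1)) k
        ≤ ∑ k, w k * L (WithLp.toLp 2 (u, 1)) k :=
          single_le_sum (fun l _ ↦ mul_nonneg (hw l).le (hu l)) (Finset.mem_univ k)
      _ = 1 := hwL _
  obtain ⟨C, hC⟩ := isBounded_iff_forall_norm_le.1 (hc.isBounded_preimage hT)
  exact isBounded_iff_forall_norm_le.2
    ⟨C, fun u hu ↦ (WithLp.norm_fst_le (p := 2) E _).trans (hC _ (hmem u hu))⟩

variable [MeasurableSpace E] [BorelSpace E]

lemma ofReal_prod_inv_le_factorial_mul_volume_slice (hι : Fintype.card ι = finrank ℝ E + 1)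
    (hinj : Function.Injective L) (hL : ∀ x, ‖L x‖ ≤ ‖x‖) (hw : ∀ k, 0 < w k)
    (hwL : ∀ x, ∑ k, w k * L x k = x.snd) :
    ENNReal.ofReal (∏ k, (w k)⁻¹) ≤
      (finrank ℝ E).factorial * volume {u | ∀ k, 0 ≤ L (WithLp.toLp 2 (u, 1)) k} := by
  have hrank : finrank ℝ (WithLp 2 (E × ℝ)) = finrank ℝ (EuclideanSpace ℝ ι) := by
    simp [(WithLp.linearEquiv 2 ℝ (E × ℝ)).finrank_eq, hι]
  have hsurj : Function.Surjective L :=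
    (LinearMap.injective_iff_surjective_of_finrank_eq_finrank hrank).1 hinj
  have hlip : LipschitzWith 1 L := by
    simpa using AddMonoidHomClass.lipschitz_of_bound L 1 (by simpa using hL)
  let O : Set (EuclideanSpace ℝ ι) := WithLp.ofLp ⁻¹' Set.Ici 0
  have hO : MeasurableSet O := (PiLp.volume_preserving_ofLp ι).measurable measurableSet_Ici
  let K : Set (E × ℝ) := {x | ∀ k, 0 ≤ L (WithLp.toLp 2 x) k}
  have hK : MeasurableSet K :=
    (WithLp.volume_preserving_toLp E ℝ).measurable (hlip.continuous.measurable hO)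
  have hK_snd : ∀ x ∈ K, 0 ≤ x.2 := fun x hx ↦ by
    rw [← WithLp.toLp_snd (p := 2) x, ← hwL]
    exact sum_nonneg fun k _ ↦ mul_nonneg (hw k).le (hx k)
  have hK_smul (t : ℝ) (ht : 0 < t) (x : E × ℝ) (hx : x ∈ K) : t • x ∈ K := fun k ↦ by
    simpa [WithLp.toLp_smul] using mul_nonneg ht.le (hx k)
  calc ENNReal.ofReal (∏ k, (w k)⁻¹)
      = ∫⁻ y in O, ENNReal.ofReal (Real.exp (-∑ k, w k * y k)) := by
        rw [← setLIntegral_Ici_exp_neg_sum hw,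
          ← (PiLp.volume_preserving_ofLp ι).setLIntegral_comp_preimage measurableSet_Ici
            (by fun_prop)]
    _ ≤ ∫⁻ y in O, ENNReal.ofReal (Real.exp (-∑ k, w k * y k)) ∂volume.map L :=
        lintegral_mono' (Measure.restrict_mono' Filter.EventuallyLE.rfl
          (volume_le_map_of_lipschitzWith_one hrank hlip hsurj)) le_rfl
    _ = ∫⁻ x in L ⁻¹' O, ENNReal.ofReal (Real.exp (-x.snd)) := by
        rw [setLIntegral_map hO (by fun_prop) hlip.continuous.measurable]
        simp only [hwL]
    _ = ∫⁻ x in K, ENNReal.ofReal (Real.exp (-x.2)) := by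
        rw [← (WithLp.volume_preserving_toLp E ℝ).setLIntegral_comp_preimage
          (hlip.continuous.measurable hO) (by fun_prop)]
        rfl
    _ = _ := setLIntegral_exp_neg_snd_cone volume hK hK_snd hK_smul

theorem prod_inv_le_factorial_mul_volume_real_slice (hι : Fintype.card ι = finrank ℝ E + 1)
    (hinj : Function.Injective L) (hL : ∀ x, ‖L x‖ ≤ ‖x‖) (hw : ∀ k, 0 < w k)
    (hwL : ∀ x, ∑ k, w k * L x k = x.snd) :
    ∏ k, (w k)⁻¹ ≤
      (finrank ℝ E).factorial * volume.real {u | ∀ k, 0 ≤ L (WithLp.toLp 2 (u, 1)) k} := by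
  have hfin : volume {u | ∀ k, 0 ≤ L (WithLp.toLp 2 (u, 1)) k} ≠ ⊤ :=
    (isBounded_slice hinj hw hwL).measure_lt_top.ne
  rw [Measure.real, ← ENNReal.toReal_natCast, ← ENNReal.toReal_mul,
    ← ENNReal.ofReal_le_iff_le_toReal (by finiteness)]
  exact ofReal_prod_inv_le_factorial_mul_volume_slice hι hinj hL hw hwL

end Geometry

lemma hasDerivAt_comp_exp_smul_apply {E : Type*} [NormedAddCommGroup E] [NormedSpace ℝ E]
    [CompleteSpace E] (A : E →L[ℝ] E) {g : E → ℝ} (hg : Differentiable ℝ g) (x : E)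
    (t : ℝ) :
    HasDerivAt (fun t : ℝ ↦ g (NormedSpace.exp (t • A) x))
      (fderiv ℝ g (NormedSpace.exp (t • A) x) (A (NormedSpace.exp (t • A) x))) t := by
  have hexp : HasDerivAt (fun t : ℝ ↦ NormedSpace.exp (t • A) x)
      (A (NormedSpace.exp (t • A) x)) t :=
    (hasDerivAt_exp_smul_const' A t).clm_apply (hasDerivAt_const t x) |>.congr_deriv (by simp)
  exact (hg _).hasFDerivAt.comp_hasDerivAt t hexp

/-- The rotation-invariant probability measure on the unit sphere of an inner product space `E`,
regarded as a measure on `E`. -/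
structure IsUniformOnSphere {E : Type*} [NormedAddCommGroup E] [InnerProductSpace ℝ E]
    [MeasurableSpace E] (σ : Measure E) : Prop where
  isProbabilityMeasure : IsProbabilityMeasure σ
  sphere_eq_one : σ (Metric.sphere 0 1) = 1
  map_eq : ∀ O : E ≃ₗᵢ[ℝ] E, σ.map O = σ

namespace IsUniformOnSphere

variable {E : Type*} [NormedAddCommGroup E] [InnerProductSpace ℝ E] [MeasurableSpace E]
  [BorelSpace E] {σ : Measure E}

lemma ae_norm_eq_one (hσ : IsUniformOnSphere σ) : ∀ᵐ x ∂σ, ‖x‖ = 1 := by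
  have := hσ.isProbabilityMeasure
  have h := (mem_ae_iff_prob_eq_one Metric.isClosed_sphere.measurableSet).2 hσ.sphere_eq_one
  filter_upwards [h] with x hx using mem_sphere_zero_iff_norm.1 hx

lemma integral_comp_linearIsometryEquiv (hσ : IsUniformOnSphere σ) (O : E ≃ₗᵢ[ℝ] E)
    (g : E → ℝ) : ∫ x, g (O x) ∂σ = ∫ x, g x ∂σ := by
  conv_rhs => rw [← hσ.map_eq O]
  exact (O.toHomeomorph.measurableEmbedding.integral_map g).symm

variable [FiniteDimensional ℝ E]

lemma integrable_of_continuous (hσ : IsUniformOnSphere σ) {g : E → ℝ} (hg : Continuous g) :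
    Integrable g σ := by
  have := hσ.isProbabilityMeasure
  have hrestrict : σ.restrict (Metric.sphere 0 1) = σ :=
    Measure.restrict_eq_self_of_ae_mem
      (hσ.ae_norm_eq_one.mono fun x hx ↦ mem_sphere_zero_iff_norm.2 hx)
  rw [← hrestrict]
  exact hg.continuousOn.integrableOn_compact (isCompact_sphere 0 1)

-- The integral of `g ∘ exp (t • A)` does not depend on `t`, and its derivative at `0` is this one.
theorem integral_fderiv_skewAdjoint (hσ : IsUniformOnSphere σ) {A : E →L[ℝ] E}
    (hA : A ∈ skewAdjoint (E →L[ℝ] E)) {g : E → ℝ} (hg : ContDiff ℝ 1 g) :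
    ∫ x, fderiv ℝ g x (A x) ∂σ = 0 := by
  have := hσ.isProbabilityMeasure
  let _ : NormedAlgebra ℚ (E →L[ℝ] E) := .restrictScalars ℚ ℝ (E →L[ℝ] E)
  have hunitary (t : ℝ) : NormedSpace.exp (t • A) ∈ unitary (E →L[ℝ] E) :=
    NormedSpace.exp_mem_unitary_of_mem_skewAdjoint (skewAdjoint.smul_mem t hA)
  have hnorm (t : ℝ) (x : E) : ‖NormedSpace.exp (t • A) x‖ = ‖x‖ :=
    Unitary.norm_map ⟨_, hunitary t⟩ x
  have hconst (t : ℝ) : ∫ x, g (NormedSpace.exp (t • A) x) ∂σ = ∫ x, g x ∂σ :=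
    hσ.integral_comp_linearIsometryEquiv (Unitary.linearIsometryEquiv ⟨_, hunitary t⟩) g
  have hcont : Continuous fun x ↦ fderiv ℝ g x (A x) :=
    (hg.continuous_fderiv one_ne_zero).clm_apply A.continuous
  obtain ⟨C, hC⟩ := (isCompact_sphere (0 : E) 1).exists_bound_of_continuousOn hcont.continuousOn
  have hderiv := (hasDerivAt_integral_of_dominated_loc_of_deriv_le (μ := σ) (𝕜 := ℝ)
    (F := fun t x ↦ g (NormedSpace.exp (t • A) x))
    (F' := fun t x ↦ fderiv ℝ g (NormedSpace.exp (t • A) x) (A (NormedSpace.exp (t • A) x)))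
    (x₀ := 0) (s := Set.univ) (bound := fun _ ↦ C) Filter.univ_mem
    (.of_forall fun t ↦
      (hg.continuous.comp (ContinuousLinearMap.continuous _)).aestronglyMeasurable)
    (hσ.integrable_of_continuous (hg.continuous.comp (ContinuousLinearMap.continuous _)))
    (hcont.comp (ContinuousLinearMap.continuous _)).aestronglyMeasurable
    (hσ.ae_norm_eq_one.mono fun x hx t _ ↦ hC _ (by simp [hnorm, hx]))
    (integrable_const C)
    (.of_forall fun x t _ ↦ hasDerivAt_comp_exp_smul_apply A (hg.differentiable one_ne_zero) x t)).2
  simp only [hconst, zero_smul, NormedSpace.exp_zero, one_apply_eq_self] at hderiv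
  exact hderiv.unique (hasDerivAt_const 0 _)

end IsUniformOnSphere

section Moments

variable {ι : Type*}

/-- The monomial `∏_{i ∈ s} x_i²` attached to a multiset `s` of indices. -/
def sqMonomial (s : Multiset ι) (x : EuclideanSpace ℝ ι) : ℝ :=
  (s.map fun i ↦ x i ^ 2).prod

lemma sqMonomial_zero (x : EuclideanSpace ℝ ι) : sqMonomial 0 x = 1 := by
  simp [sqMonomial]

lemma sqMonomial_cons (i : ι) (s : Multiset ι) (x : EuclideanSpace ℝ ι) :
    sqMonomial (i ::ₘ s) x = x i ^ 2 * sqMonomial s x := by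
  simp [sqMonomial]

lemma continuous_sqMonomial (s : Multiset ι) : Continuous (sqMonomial s) :=
  continuous_multiset_prod s fun i _ ↦ by fun_prop

lemma contDiff_sqMonomial [Fintype ι] (s : Multiset ι) : ContDiff ℝ 1 (sqMonomial s) := by
  induction s using Multiset.induction_on with
  | empty => simpa only [funext sqMonomial_zero] using contDiff_const
  | cons i s ih =>
    rw [funext (sqMonomial_cons i s)]
    fun_prop

lemma hasFDerivAt_sqMonomial [Finite ι] (s : Multiset ι) (x : EuclideanSpace ℝ ι) :
    HasFDerivAt (sqMonomial s) (fderiv ℝ (sqMonomial s) x) x := by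
  cases nonempty_fintype ι
  exact ((contDiff_sqMonomial s).differentiable one_ne_zero x).hasFDerivAt

lemma mul_fderiv_sqMonomial_single [Finite ι] [DecidableEq ι] (s : Multiset ι) (j : ι)
    (x : EuclideanSpace ℝ ι) :
    x j * fderiv ℝ (sqMonomial s) x (EuclideanSpace.single j 1) =
      2 * s.count j * sqMonomial s x := by
  cases nonempty_fintype ι
  induction s using Multiset.induction_on with
  | empty => simp [funext sqMonomial_zero]
  | cons i s ih =>
    have hmul : HasFDerivAt (fun x ↦ x i ^ 2 * sqMonomial s x) _ x :=
      ((PiLp.hasFDerivAt_apply (𝕜 := ℝ) 2 x i).pow 2).mul (hasFDerivAt_sqMonomial s x)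
    rw [funext (sqMonomial_cons i s), hmul.fderiv]
    obtain rfl | hij := eq_or_ne i j
    · simp only [Nat.add_one_sub_one, pow_one, nsmul_eq_mul, Nat.cast_ofNat, add_apply, smul_apply,
        smul_eq_mul, PiLp.proj_apply, PiLp.single_eq_same, mul_one, Multiset.count_cons_self,
        Nat.cast_add, Nat.cast_one]
      linear_combination x i ^ 2 * ih
    · simp only [Nat.add_one_sub_one, pow_one, nsmul_eq_mul, Nat.cast_ofNat, add_apply, smul_apply,
        smul_eq_mul, PiLp.proj_apply, ne_eq, hij, hij.symm, not_false_eq_true,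
        PiLp.single_eq_of_ne, mul_zero, add_zero, Multiset.count_cons_of_ne]
      linear_combination x i ^ 2 * ih

variable [Fintype ι]

lemma IsUniformOnSphere.integrable_sq_mul_sqMonomial {σ : Measure (EuclideanSpace ℝ ι)}
    (hσ : IsUniformOnSphere σ) (s : Multiset ι) (i : ι) :
    Integrable (fun x ↦ x i ^ 2 * sqMonomial s x) σ :=
  hσ.integrable_of_continuous <| by have := continuous_sqMonomial s; fun_prop

variable [DecidableEq ι]

/-- The infinitesimal rotation `x ↦ x_i e_j - x_j e_i` of the `(i, j)`-plane. -/
def planeRotation (i j : ι) : EuclideanSpace ℝ ι →L[ℝ] EuclideanSpace ℝ ι :=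
  InnerProductSpace.rankOne ℝ (EuclideanSpace.single j 1) (EuclideanSpace.single i 1) -
    InnerProductSpace.rankOne ℝ (EuclideanSpace.single i 1) (EuclideanSpace.single j 1)

lemma planeRotation_apply (i j : ι) (x : EuclideanSpace ℝ ι) :
    planeRotation i j x = x i • EuclideanSpace.single j 1 - x j • EuclideanSpace.single i 1 := by
  simp [planeRotation, EuclideanSpace.inner_single_left]

lemma planeRotation_mem_skewAdjoint (i j : ι) :
    planeRotation i j ∈ skewAdjoint (EuclideanSpace ℝ ι →L[ℝ] EuclideanSpace ℝ ι) := by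
  simp [planeRotation, skewAdjoint.mem_iff, ContinuousLinearMap.star_eq_adjoint,
    InnerProductSpace.adjoint_rankOne]

lemma fderiv_planeRotation {i j : ι} (hij : i ≠ j) (s : Multiset ι) (x : EuclideanSpace ℝ ι) :
    fderiv ℝ (fun x : EuclideanSpace ℝ ι ↦ x i * x j * sqMonomial s x) x (planeRotation i j x) =
      (1 + 2 * s.count j) * (x i ^ 2 * sqMonomial s x) -
        (1 + 2 * s.count i) * (x j ^ 2 * sqMonomial s x) := by
  have hmul : HasFDerivAt (fun x : EuclideanSpace ℝ ι ↦ x i * x j * sqMonomial s x) _ x :=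
    ((PiLp.hasFDerivAt_apply (𝕜 := ℝ) 2 x i).mul (PiLp.hasFDerivAt_apply (𝕜 := ℝ) 2 x j)).mul
      (hasFDerivAt_sqMonomial s x)
  have hi := mul_fderiv_sqMonomial_single s i x
  have hj := mul_fderiv_sqMonomial_single s j x
  rw [hmul.fderiv, planeRotation_apply]
  simp only [Pi.mul_apply, smul_add, add_apply, smul_apply, map_sub, map_smul, smul_eq_mul,
    PiLp.proj_apply, PiLp.single_eq_same, mul_one, ne_eq, hij, hij.symm, not_false_eq_true,
    PiLp.single_eq_of_ne, mul_zero]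
  linear_combination x i ^ 2 * hj - x j ^ 2 * hi

namespace IsUniformOnSphere

variable {σ : Measure (EuclideanSpace ℝ ι)}

lemma integral_sq_mul_sqMonomial_comm (hσ : IsUniformOnSphere σ) (s : Multiset ι) (i j : ι) :
    (1 + 2 * s.count j) * ∫ x, x i ^ 2 * sqMonomial s x ∂σ =
      (1 + 2 * s.count i) * ∫ x, x j ^ 2 * sqMonomial s x ∂σ := by
  obtain rfl | hij := eq_or_ne i j
  · rfl
  have hrot := hσ.integral_fderiv_skewAdjoint (planeRotation_mem_skewAdjoint i j)
    (g := fun x ↦ x i * x j * sqMonomial s x)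
    (by have := contDiff_sqMonomial s; fun_prop)
  simp only [fderiv_planeRotation hij] at hrot
  rwa [integral_sub ((hσ.integrable_sq_mul_sqMonomial s i).const_mul _)
    ((hσ.integrable_sq_mul_sqMonomial s j).const_mul _), integral_const_mul, integral_const_mul,
    sub_eq_zero] at hrot

-- Pólya's urn: summing `integral_sq_mul_sqMonomial_comm` over `j` uses `∑ j, x j ^ 2 = 1`.
theorem integral_sqMonomial_cons (hσ : IsUniformOnSphere σ) (i : ι) (s : Multiset ι) :
    ∫ x, sqMonomial (i ::ₘ s) x ∂σ =
      (1 + 2 * s.count i) / (Fintype.card ι + 2 * s.card) * ∫ x, sqMonomial s x ∂σ := by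
  have hpos : (0 : ℝ) < Fintype.card ι + 2 * s.card := by
    have : Nonempty ι := ⟨i⟩
    have := Fintype.card_pos (α := ι)
    positivity
  have hcard : ∑ j, (s.count j : ℝ) = s.card := by
    exact_mod_cast Multiset.sum_count_eq_card fun _ _ ↦ Finset.mem_univ _
  have hsum : ∑ j, ∫ x, x j ^ 2 * sqMonomial s x ∂σ = ∫ x, sqMonomial s x ∂σ := by
    rw [← integral_finsetSum _ fun k _ ↦ hσ.integrable_sq_mul_sqMonomial s k]
    refine integral_congr_ae (hσ.ae_norm_eq_one.mono fun x hx ↦ ?_)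
    simp only [← Finset.sum_mul, ← EuclideanSpace.real_norm_sq_eq, hx, one_pow, one_mul]
  have hrec : (Fintype.card ι + 2 * s.card) * ∫ x, x i ^ 2 * sqMonomial s x ∂σ =
      (1 + 2 * s.count i) * ∫ x, sqMonomial s x ∂σ :=
    calc _ = ∑ j, (1 + 2 * s.count j) * ∫ x, x i ^ 2 * sqMonomial s x ∂σ := by
          simp only [← Finset.sum_mul, Finset.sum_add_distrib, ← Finset.mul_sum, hcard]
          simp
      _ = ∑ j, (1 + 2 * s.count i) * ∫ x, x j ^ 2 * sqMonomial s x ∂σ :=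
          Finset.sum_congr rfl fun j _ ↦ hσ.integral_sq_mul_sqMonomial_comm s i j
      _ = _ := by rw [← Finset.mul_sum, hsum]
  simp only [sqMonomial_cons]
  rw [div_mul_eq_mul_div, eq_div_iff hpos.ne', mul_comm, hrec]

end IsUniformOnSphere

end Moments

section Quartics

variable {n : ℕ}

local notation "δ" => (1 : Matrix (Fin n) (Fin n) ℝ)

lemma count_cons_eq_add_delta (i j : Fin n) (s : Multiset (Fin n)) :
    ((j ::ₘ s).count i : ℝ) = s.count i + δ i j := by
  simp [Multiset.count_cons, Matrix.one_apply]

namespace IsUniformOnSphere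

variable {σ : Measure (EuclideanSpace ℝ (Fin n))}

lemma integral_sqMonomial_pair (hσ : IsUniformOnSphere σ) (i j : Fin n) :
    ∫ x, sqMonomial {i, j} x ∂σ = (1 + 2 * δ i j) / (n * (n + 2)) := by
  have := hσ.isProbabilityMeasure
  simp only [Multiset.insert_eq_cons, ← Multiset.cons_zero, hσ.integral_sqMonomial_cons,
    sqMonomial_zero, count_cons_eq_add_delta, Multiset.card_cons, Multiset.card_zero,
    Multiset.count_zero, integral_const, probReal_univ, one_smul, Fintype.card_fin]
  push_cast
  simp only [div_eq_mul_inv, mul_inv]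
  ring

lemma integral_sqMonomial_quadruple (hσ : IsUniformOnSphere σ) (i j k l : Fin n) :
    ∫ x, sqMonomial {i, j, k, l} x ∂σ =
      (1 + 2 * (δ i j + δ i k + δ i l)) * (1 + 2 * (δ j k + δ j l)) * (1 + 2 * δ k l) /
        (n * (n + 2) * (n + 4) * (n + 6)) := by
  rw [Multiset.insert_eq_cons, hσ.integral_sqMonomial_cons, Multiset.insert_eq_cons,
    hσ.integral_sqMonomial_cons, hσ.integral_sqMonomial_pair]
  simp only [Multiset.insert_eq_cons, ← Multiset.cons_zero, count_cons_eq_add_delta,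
    Multiset.card_cons, Multiset.card_zero, Multiset.count_zero, Fintype.card_fin]
  push_cast
  simp only [div_eq_mul_inv, mul_inv]
  ring

end IsUniformOnSphere

lemma continuous_qfun (a : symSub n) : Continuous (qfun a) := by
  unfold qfun
  fun_prop

lemma qfun_eq_sum_sqMonomial (a : symSub n) (x : EuclideanSpace ℝ (Fin n)) :
    qfun a x = ∑ i, ∑ j, a.1 i j * sqMonomial {i, j} x := by
  simp [qfun, sqMonomial, mul_assoc]

/-- The coefficients of the quartic `a`, weighted by the relative sizes `1 + 2 δ_ij` of the moments
of `x_i² x_j²` on the sphere. -/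
def momentCoeff (a : symSub n) (i j : Fin n) : ℝ := (1 + 2 * δ i j) * a.1 i j

lemma momentCoeff_comm (a : symSub n) (i j : Fin n) : momentCoeff a i j = momentCoeff a j i := by
  simp [momentCoeff, Matrix.one_apply, a.2 i j, eq_comm]

lemma sum_delta_add_delta_mul_of_symm {b : Fin n → Fin n → ℝ} (hb : ∀ i j, b i j = b j i)
    (i : Fin n) : ∑ k, ∑ l, (δ i k + δ i l) * b k l = 2 * ∑ l, b i l := by
  simp [add_mul, sum_add_distrib, Matrix.one_apply, hb _ i, two_mul]

lemma sum_urn_mul_of_symm {b : Fin n → Fin n → ℝ} (hb : ∀ i j, b i j = b j i) (i j : Fin n) :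
    ∑ k, ∑ l, (1 + 2 * (δ i j + δ i k + δ i l)) * (1 + 2 * (δ j k + δ j l)) * b k l =
      (1 + 2 * δ i j) * (∑ k, ∑ l, b k l + 4 * ∑ l, b i l + 4 * ∑ l, b j l) + 8 * b i j := by
  let c (k l : Fin n) : ℝ := (1 + 2 * (δ j k + δ j l)) * b k l
  have hc (k l : Fin n) : c k l = c l k := by simp only [c, hb k l, add_comm (δ j k)]
  have hc_sum : ∑ k, ∑ l, c k l = ∑ k, ∑ l, b k l + 4 * ∑ l, b j l := by
    simp only [c, add_mul (1 : ℝ), one_mul, mul_assoc, sum_add_distrib, ← mul_sum,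
      sum_delta_add_delta_mul_of_symm hb]
    ring
  have hc_row : ∑ l, c i l = (1 + 2 * δ i j) * ∑ l, b i l + 2 * b i j := by
    simp only [c, mul_add, add_mul, one_mul, sum_add_distrib, ← mul_sum, mul_assoc]
    simp only [Matrix.one_apply, eq_comm (a := j), ite_mul, one_mul, zero_mul, sum_ite_eq',
      mem_univ, if_true]
    ring
  calc _ = (1 + 2 * δ i j) * ∑ k, ∑ l, c k l + 2 * ∑ k, ∑ l, (δ i k + δ i l) * c k l := by
        simp only [mul_sum, ← sum_add_distrib, c]
        congr! 2
        ring
    _ = _ := by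
        rw [sum_delta_add_delta_mul_of_symm hc, hc_sum, hc_row]
        ring

namespace IsUniformOnSphere

variable {σ : Measure (EuclideanSpace ℝ (Fin n))}

theorem integral_qfun (hσ : IsUniformOnSphere σ) (a : symSub n) :
    ∫ x, qfun a x ∂σ = (∑ i, ∑ j, momentCoeff a i j) / (n * (n + 2)) := by
  have hint (i j : Fin n) : Integrable (fun x ↦ a.1 i j * sqMonomial {i, j} x) σ :=
    (hσ.integrable_of_continuous (continuous_sqMonomial _)).const_mul _
  simp only [qfun_eq_sum_sqMonomial]
  rw [integral_finsetSum _ fun i _ ↦ integrable_finsetSum _ fun j _ ↦ hint i j]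
  simp only [integral_finsetSum _ fun j _ ↦ hint _ j, integral_const_mul,
    hσ.integral_sqMonomial_pair, sum_div, momentCoeff]
  congr! 2
  ring

theorem integral_sqMonomial_pair_mul_qfun (hσ : IsUniformOnSphere σ) (a : symSub n) (i j : Fin n) :
    ∫ x, sqMonomial {i, j} x * qfun a x ∂σ =
      ((1 + 2 * δ i j) * (∑ k, ∑ l, momentCoeff a k l + 4 * ∑ l, momentCoeff a i l +
        4 * ∑ l, momentCoeff a j l) + 8 * momentCoeff a i j) /
          (n * (n + 2) * (n + 4) * (n + 6)) := by
  have hint (k l : Fin n) : Integrable (fun x ↦ a.1 k l * sqMonomial {i, j, k, l} x) σ :=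
    (hσ.integrable_of_continuous (continuous_sqMonomial _)).const_mul _
  have hexpand (x) : sqMonomial {i, j} x * qfun a x =
      ∑ k, ∑ l, a.1 k l * sqMonomial {i, j, k, l} x := by
    simp only [qfun_eq_sum_sqMonomial, mul_sum]
    congr! 2
    simp only [Multiset.insert_eq_cons, sqMonomial_cons, ← Multiset.cons_zero, sqMonomial_zero]
    ring
  simp only [hexpand]
  rw [integral_finsetSum _ fun i _ ↦ integrable_finsetSum _ fun j _ ↦ hint i j,
    ← sum_urn_mul_of_symm (momentCoeff_comm a)]
  simp only [integral_finsetSum _ fun j _ ↦ hint _ j, integral_const_mul,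
    hσ.integral_sqMonomial_quadruple, sum_div, momentCoeff]
  congr! 2
  ring

theorem integral_qfun_mul_self (hσ : IsUniformOnSphere σ) (a : symSub n) :
    ∫ x, qfun a x * qfun a x ∂σ =
      ((∑ i, ∑ j, momentCoeff a i j) ^ 2 + 8 * ∑ i, (∑ j, momentCoeff a i j) ^ 2 +
        8 * ∑ i, ∑ j, momentCoeff a i j * a.1 i j) / (n * (n + 2) * (n + 4) * (n + 6)) := by
  have hint (i j : Fin n) :
      Integrable (fun x ↦ a.1 i j * (sqMonomial {i, j} x * qfun a x)) σ := by
    refine hσ.integrable_of_continuous ?_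
    have := continuous_sqMonomial ({i, j} : Multiset (Fin n))
    have := continuous_qfun a
    fun_prop
  have hexpand (x) : qfun a x * qfun a x =
      ∑ i, ∑ j, a.1 i j * (sqMonomial {i, j} x * qfun a x) := by
    simp only [← mul_assoc, ← sum_mul, ← qfun_eq_sum_sqMonomial]
  simp only [hexpand]
  rw [integral_finsetSum _ fun i _ ↦ integrable_finsetSum _ fun j _ ↦ hint i j]
  simp only [integral_finsetSum _ fun j _ ↦ hint _ j, integral_const_mul,
    hσ.integral_sqMonomial_pair_mul_qfun, ← mul_div_assoc, ← sum_div]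
  congr 1
  let S := ∑ k, ∑ l, momentCoeff a k l
  let R (i : Fin n) := ∑ l, momentCoeff a i l
  calc _ = ∑ i, ∑ j, (momentCoeff a i j * S + 4 * (momentCoeff a i j * R i) +
        4 * (momentCoeff a j i * R j) + 8 * (momentCoeff a i j * a.1 i j)) := by
        congr! 2 with i _ j _
        have hm : momentCoeff a i j = (1 + 2 * δ i j) * a.1 i j := rfl
        rw [momentCoeff_comm a j i]
        linear_combination -(S + 4 * R i + 4 * R j) * hm
    _ = _ := by
        simp only [sum_add_distrib, ← mul_sum]
        rw [sum_comm (f := fun i j ↦ momentCoeff a j i * R j)]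
        simp only [← sum_mul, S, R, sq]
        ring

end IsUniformOnSphere

lemma qfun_add (a b : symSub n) (x : EuclideanSpace ℝ (Fin n)) :
    qfun (a + b) x = qfun a x + qfun b x := by
  simp [qfun, add_mul, sum_add_distrib]

lemma qfun_smul (c : ℝ) (a : symSub n) (x : EuclideanSpace ℝ (Fin n)) :
    qfun (c • a) x = c * qfun a x := by
  simp [qfun, mul_sum, mul_assoc]

lemma qfun_rQ (x : EuclideanSpace ℝ (Fin n)) : qfun (rQ n) x = ‖x‖ ^ 4 := by
  rw [show 4 = 2 * 2 from rfl, pow_mul, EuclideanSpace.real_norm_sq_eq, sq, sum_mul_sum]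
  simp [qfun, rQ]

/-- The isometric extension of an isometry `ψ` onto mean-zero quartics to all quartics, taking
`(u, t)` to `ψ u + t r`. -/
def extendByRQ {E : Type*} [AddCommGroup E] [Module ℝ E] (ψ : E →ₗ[ℝ] symSub n) :
    WithLp 2 (E × ℝ) →ₗ[ℝ] symSub n :=
  ψ.coprod (LinearMap.toSpanSingleton ℝ (symSub n) (rQ n)) ∘ₗ
    (WithLp.linearEquiv 2 ℝ (E × ℝ)).toLinearMap

lemma extendByRQ_apply {E : Type*} [AddCommGroup E] [Module ℝ E] (ψ : E →ₗ[ℝ] symSub n)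
    (v : WithLp 2 (E × ℝ)) : extendByRQ ψ v = ψ v.fst + v.snd • rQ n := rfl

namespace IsUniformOnSphere

variable {σ : Measure (EuclideanSpace ℝ (Fin n))}

lemma ae_qfun_add_smul_rQ (hσ : IsUniformOnSphere σ) (a : symSub n) (t : ℝ) :
    ∀ᵐ x ∂σ, qfun (a + t • rQ n) x = qfun a x + t := by
  filter_upwards [hσ.ae_norm_eq_one] with x hx
  rw [qfun_add, qfun_smul, qfun_rQ, hx, one_pow, mul_one]

lemma integral_qfun_add_smul_rQ (hσ : IsUniformOnSphere σ) (a : symSub n) (t : ℝ) :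
    ∫ x, qfun (a + t • rQ n) x ∂σ = ∫ x, qfun a x ∂σ + t := by
  have := hσ.isProbabilityMeasure
  rw [integral_congr_ae (hσ.ae_qfun_add_smul_rQ a t),
    integral_add (hσ.integrable_of_continuous (continuous_qfun a)) (integrable_const t),
    integral_const, probReal_univ, one_smul]

lemma integral_qfun_add_smul_rQ_mul_self (hσ : IsUniformOnSphere σ) {a : symSub n}
    (ha : ∫ x, qfun a x ∂σ = 0) (t : ℝ) :
    ∫ x, qfun (a + t • rQ n) x * qfun (a + t • rQ n) x ∂σ =
      ∫ x, qfun a x * qfun a x ∂σ + t ^ 2 := by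
  have := hσ.isProbabilityMeasure
  have hcont := continuous_qfun a
  have hexpand : ∀ᵐ x ∂σ, qfun (a + t • rQ n) x * qfun (a + t • rQ n) x =
      qfun a x * qfun a x + 2 * t * qfun a x + t ^ 2 := by
    filter_upwards [hσ.ae_qfun_add_smul_rQ a t] with x hx
    rw [hx]
    ring
  rw [integral_congr_ae hexpand, integral_add (hσ.integrable_of_continuous (by fun_prop))
    (integrable_const _), integral_add (hσ.integrable_of_continuous (by fun_prop))
    (hσ.integrable_of_continuous (by fun_prop)), integral_const_mul, ha]
  simp

variable {E : Type*} [NormedAddCommGroup E] [InnerProductSpace ℝ E] {ψ : E →ₗ[ℝ] symSub n}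

lemma integral_qfun_extendByRQ (hσ : IsUniformOnSphere σ) (hψ : ∀ u, ∫ x, qfun (ψ u) x ∂σ = 0)
    (v : WithLp 2 (E × ℝ)) : ∫ x, qfun (extendByRQ ψ v) x ∂σ = v.snd := by
  rw [extendByRQ_apply, hσ.integral_qfun_add_smul_rQ, hψ, zero_add]

lemma integral_qfun_extendByRQ_mul_self (hσ : IsUniformOnSphere σ)
    (hψ : ∀ u, ∫ x, qfun (ψ u) x ∂σ = 0)
    (hψ_sq : ∀ u, ∫ x, qfun (ψ u) x * qfun (ψ u) x ∂σ = ‖u‖ ^ 2) (v : WithLp 2 (E × ℝ)) :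
    ∫ x, qfun (extendByRQ ψ v) x * qfun (extendByRQ ψ v) x ∂σ = ‖v‖ ^ 2 := by
  rw [extendByRQ_apply, hσ.integral_qfun_add_smul_rQ_mul_self (hψ _), hψ_sq,
    WithLp.prod_norm_sq_eq_of_L2, Real.norm_eq_abs, sq_abs]

lemma extendByRQ_injective (hσ : IsUniformOnSphere σ)
    (hψ : ∀ u, ∫ x, qfun (ψ u) x ∂σ = 0)
    (hψ_sq : ∀ u, ∫ x, qfun (ψ u) x * qfun (ψ u) x ∂σ = ‖u‖ ^ 2) :
    Function.Injective (extendByRQ ψ) := by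
  refine (injective_iff_map_eq_zero _).2 fun v hv ↦ ?_
  have hnorm := hσ.integral_qfun_extendByRQ_mul_self hψ hψ_sq v
  simpa [hv, qfun] using hnorm.symm

end IsUniformOnSphere

/-- The coefficients of a quartic, indexed by unordered pairs `s(i, j)`: the value there is the
common entry `a i j = a j i`. -/
def sym2Coeff : symSub n →ₗ[ℝ] (Sym2 (Fin n) → ℝ) where
  toFun a := Sym2.lift ⟨a.1, a.2⟩
  map_add' _ _ := funext (Sym2.ind fun _ _ ↦ rfl)
  map_smul' _ _ := funext (Sym2.ind fun _ _ ↦ rfl)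

lemma sym2Coeff_mk (a : symSub n) (i j : Fin n) : sym2Coeff a s(i, j) = a.1 i j := rfl

lemma sym2Coeff_injective : Function.Injective (sym2Coeff (n := n)) := fun _ _ hab ↦
  Subtype.ext <| funext₂ fun i j ↦ congr_fun hab s(i, j)

/-- The total weight `∑ (1 + 2 δ_ij)` of the ordered pairs `(i, j)` representing `z`. -/
def momentMult (z : Sym2 (Fin n)) : ℝ := if z.IsDiag then 3 else 2

lemma momentMult_pos (z : Sym2 (Fin n)) : 0 < momentMult z := by
  unfold momentMult
  positivity

lemma sum_one_add_two_mul_delta_mul (f : Sym2 (Fin n) → ℝ) :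
    ∑ i, ∑ j, (1 + 2 * δ i j) * f s(i, j) = ∑ z, momentMult z * f z := by
  rw [← Fintype.sum_prod_type' (f := fun i j ↦ (1 + 2 * δ i j) * f s(i, j)),
    ← sum_fiberwise univ (fun p : Fin n × Fin n ↦ s(p.1, p.2))]
  refine sum_congr rfl fun z _ ↦ ?_
  induction z using Sym2.ind with | _ i j
  have hfiber : ({p | s(p.1, p.2) = s(i, j)} : Finset (Fin n × Fin n)) = {(i, j), (j, i)} := by
    ext p
    simp [Prod.ext_iff]
  rw [hfiber]
  obtain rfl | hij := eq_or_ne i j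
  · rw [pair_eq_singleton, sum_singleton, Matrix.one_apply_eq, momentMult,
      if_pos (Sym2.mk_isDiag_iff.2 rfl)]
    norm_num
  · rw [sum_pair (by simp [hij])]
    simp [momentMult, hij, hij.symm, Sym2.eq_swap (a := j), two_mul]

lemma prod_two_div_momentMult : ∏ z : Sym2 (Fin n), 2 / momentMult z = (2 / 3) ^ n := by
  have hite (z : Sym2 (Fin n)) : 2 / momentMult z = if z.IsDiag then 2 / 3 else 1 := by
    unfold momentMult
    split_ifs <;> norm_num
  simp only [hite, prod_ite, prod_const, one_pow, mul_one, ← Fintype.card_subtype,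
    Sym2.card_subtype_diag, Fintype.card_fin]

/-- The factor between a coefficient of a quartic and its coordinate in `scaledCoeff`, chosen so
that the squared coordinates add up to the last term of `integral_qfun_mul_self`. -/
def coeffScale (z : Sym2 (Fin n)) : ℝ := √(8 * momentMult z / (n * (n + 2) * (n + 4) * (n + 6)))

/-- The coordinates of a quartic in which the positive semidefinite form `∫ qfun a ^ 2` dominates
the squared Euclidean norm and `NNQ n` is the nonnegative orthant. -/
def scaledCoeff : symSub n →ₗ[ℝ] EuclideanSpace ℝ (Sym2 (Fin n)) :=
  (WithLp.linearEquiv 2 ℝ (Sym2 (Fin n) → ℝ)).symm.toLinearMap ∘ₗ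
    LinearMap.pi (fun z ↦ coeffScale z • LinearMap.proj z) ∘ₗ sym2Coeff

lemma scaledCoeff_apply (a : symSub n) (z : Sym2 (Fin n)) :
    scaledCoeff a z = coeffScale z * sym2Coeff a z := rfl

lemma IsUniformOnSphere.norm_scaledCoeff_sq_le
    {σ : Measure (EuclideanSpace ℝ (Fin n))} (hσ : IsUniformOnSphere σ) (a : symSub n) :
    ‖scaledCoeff a‖ ^ 2 ≤ ∫ x, qfun a x * qfun a x ∂σ := by
  have hsq (z : Sym2 (Fin n)) : scaledCoeff a z ^ 2 =
      8 * (momentMult z * sym2Coeff a z ^ 2) / (n * (n + 2) * (n + 4) * (n + 6)) := by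
    have := momentMult_pos z
    rw [scaledCoeff_apply, mul_pow, coeffScale, Real.sq_sqrt (by positivity)]
    ring
  have hdiag : ∑ i, ∑ j, momentCoeff a i j * a.1 i j =
      ∑ z, momentMult z * sym2Coeff a z ^ 2 := by
    simp only [← sum_one_add_two_mul_delta_mul, momentCoeff, sym2Coeff_mk, sq, mul_assoc]
  rw [EuclideanSpace.real_norm_sq_eq, hσ.integral_qfun_mul_self, hdiag]
  simp only [hsq, ← sum_div, ← mul_sum]
  gcongr
  exact le_add_of_nonneg_left (by positivity)

/-- The coefficients of the mean of a quartic in the coordinates `scaledCoeff`. -/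
def meanWeight (z : Sym2 (Fin n)) : ℝ := momentMult z / (n * (n + 2) * coeffScale z)

variable [NeZero n]

lemma coeffScale_pos (z : Sym2 (Fin n)) : 0 < coeffScale z := by
  have := momentMult_pos z
  have := NeZero.pos n
  unfold coeffScale
  positivity

lemma meanWeight_pos (z : Sym2 (Fin n)) : 0 < meanWeight z := by
  have := momentMult_pos z
  have := coeffScale_pos z
  have := NeZero.pos n
  unfold meanWeight
  positivity

lemma scaledCoeff_injective : Function.Injective (scaledCoeff (n := n)) := fun _ _ hab ↦
  sym2Coeff_injective <| funext fun z ↦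
    mul_left_cancel₀ (coeffScale_pos z).ne' (congr_fun (congr_arg WithLp.ofLp hab) z)

lemma forall_scaledCoeff_nonneg_iff (a : symSub n) : (∀ z, 0 ≤ scaledCoeff a z) ↔ a ∈ NNQ n := by
  simp only [scaledCoeff_apply, mul_nonneg_iff_of_pos_left (coeffScale_pos _), Sym2.forall,
    sym2Coeff_mk]
  rfl

lemma prod_inv_meanWeight_sq {d : ℕ} (hd : Fintype.card (Sym2 (Fin n)) = d + 1) :
    (∏ z : Sym2 (Fin n), (meanWeight z)⁻¹) ^ 2 =
      (2 / 3) ^ n * (4 * (n * (n + 2) / ((n + 4) * (n + 6)))) ^ (d + 1) := by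
  have hn : (n : ℝ) ≠ 0 := NeZero.ne _
  have hsq (z : Sym2 (Fin n)) : (meanWeight z)⁻¹ ^ 2 =
      2 / momentMult z * (4 * (n * (n + 2) / ((n + 4) * (n + 6)))) := by
    have hm := momentMult_pos z
    have hscale : coeffScale z ^ 2 = 8 * momentMult z / (n * (n + 2) * (n + 4) * (n + 6)) :=
      Real.sq_sqrt (by positivity)
    rw [meanWeight, inv_div, div_pow, mul_pow, hscale]
    field_simp
    ring
  rw [← prod_pow, prod_congr rfl fun z _ ↦ hsq z, prod_mul_distrib, prod_two_div_momentMult,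
    prod_const, card_univ, hd]

lemma IsUniformOnSphere.sum_meanWeight_mul_scaledCoeff
    {σ : Measure (EuclideanSpace ℝ (Fin n))} (hσ : IsUniformOnSphere σ) (a : symSub n) :
    ∑ z, meanWeight z * scaledCoeff a z = ∫ x, qfun a x ∂σ := by
  rw [hσ.integral_qfun]
  simp only [momentCoeff, ← sym2Coeff_mk, sum_one_add_two_mul_delta_mul, sum_div]
  refine sum_congr rfl fun z _ ↦ ?_
  have := (coeffScale_pos z).ne'
  rw [meanWeight, scaledCoeff_apply]
  field_simp

theorem IsUniformOnSphere.prod_inv_meanWeight_le_factorial_mul_volume_sect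
    {σ : Measure (EuclideanSpace ℝ (Fin n))} {E : Type*} [NormedAddCommGroup E]
    [InnerProductSpace ℝ E] [FiniteDimensional ℝ E] [MeasurableSpace E] [BorelSpace E]
    {ψ : E →ₗ[ℝ] symSub n} (hσ : IsUniformOnSphere σ)
    (hψ : ∀ u, ∫ x, qfun (ψ u) x ∂σ = 0)
    (hψ_sq : ∀ u, ∫ x, qfun (ψ u) x * qfun (ψ u) x ∂σ = ‖u‖ ^ 2)
    (hE : Fintype.card (Sym2 (Fin n)) = Module.finrank ℝ E + 1) :
    ∏ z : Sym2 (Fin n), (meanWeight z)⁻¹ ≤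
      (Module.finrank ℝ E).factorial * volume.real (ψ ⁻¹' sect σ (NNQ n)) := by
  let L := scaledCoeff ∘ₗ extendByRQ ψ
  have hL_slice : {u | ∀ z, 0 ≤ L (WithLp.toLp 2 (u, 1)) z} = ψ ⁻¹' sect σ (NNQ n) := by
    ext u
    simp only [L, sect, hψ, LinearMap.comp_apply, forall_scaledCoeff_nonneg_iff, extendByRQ_apply,
      WithLp.toLp_fst, WithLp.toLp_snd, one_smul, Set.mem_preimage, Set.mem_ofPred_eq, true_and]
  have hL_norm (v) : ‖L v‖ ≤ ‖v‖ := by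
    refine le_of_sq_le_sq ?_ (norm_nonneg v)
    rw [← hσ.integral_qfun_extendByRQ_mul_self hψ hψ_sq]
    exact hσ.norm_scaledCoeff_sq_le _
  have hL_mean (v) : ∑ z, meanWeight z * L v z = v.snd :=
    (hσ.sum_meanWeight_mul_scaledCoeff _).trans (hσ.integral_qfun_extendByRQ hψ v)
  rw [← hL_slice]
  exact prod_inv_le_factorial_mul_volume_real_slice hE
    (scaledCoeff_injective.comp (hσ.extendByRQ_injective hψ hψ_sq)) hL_norm meanWeight_pos hL_mean

end Quartics

lemma two_mul_div_two_sub_one_add_one {n : ℕ} (hn : 0 < n) :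
    2 * (n * (n + 1) / 2 - 1 + 1) = n * (n + 1) := by
  have heven := Nat.two_mul_div_two_of_even (Nat.even_mul_succ_self n)
  have : 0 < n * (n + 1) := by positivity
  lia

lemma card_sym2_fin {n d : ℕ} (hd : 2 * (d + 1) = n * (n + 1)) :
    Fintype.card (Sym2 (Fin n)) = d + 1 := by
  rw [Sym2.card, Fintype.card_fin, Nat.choose_two_right, Nat.add_sub_cancel, mul_comm, ← hd,
    Nat.mul_div_cancel_left _ two_pos]

/-- For every `n ≥ 5`, `vrad(NN_Q~) ≥ 1/(√2 · n)`. -/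
theorem stmt1 (n : ℕ) (hn : 5 ≤ n)
    (σ : Measure (EuclideanSpace ℝ (Fin n)))
    (hσprob : IsProbabilityMeasure σ)
    (hσsphere : σ (Metric.sphere (0 : EuclideanSpace ℝ (Fin n)) 1) = 1)
    (hσinv : ∀ O : EuclideanSpace ℝ (Fin n) ≃ₗᵢ[ℝ] EuclideanSpace ℝ (Fin n),
      Measure.map (⇑O) σ = σ)
    (ψ : EuclideanSpace ℝ (Fin (n*(n+1)/2 - 1)) →ₗ[ℝ] symSub n)
    (hψinj : Function.Injective ⇑ψ)
    (hψrange : Set.range ⇑ψ = {a : symSub n | (∫ x, qfun a x ∂σ) = 0})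
    (hψisom : ∀ u v, (∫ x, qfun (ψ u) x * qfun (ψ v) x ∂σ) = ∑ i, u i * v i) :
    1 / (Real.sqrt 2 * n) ≤ vrad ψ (sect σ (NNQ n)) := by
  have hσ : IsUniformOnSphere σ := ⟨hσprob, hσsphere, hσinv⟩
  have : NeZero n := ⟨by lia⟩
  have hd := two_mul_div_two_sub_one_add_one (n := n) (by lia)
  have hcard := card_sym2_fin hd
  have hd_ge : 3 ≤ n * (n + 1) / 2 - 1 := by nlinarith
  have hψ_mean (u) : ∫ x, qfun (ψ u) x ∂σ = 0 := hψrange.subset (Set.mem_range_self u)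
  have hψ_sq (u) : ∫ x, qfun (ψ u) x * qfun (ψ u) x ∂σ = ‖u‖ ^ 2 := by
    rw [hψisom, EuclideanSpace.real_norm_sq_eq]
    simp only [sq]
  have hvol := hσ.prod_inv_meanWeight_le_factorial_mul_volume_sect hψ_mean hψ_sq
    (by rw [finrank_euclideanSpace_fin, hcard])
  rw [finrank_euclideanSpace_fin] at hvol
  refine le_vrad (by lia) (by positivity) <| one_div_pow_mul_volume_real_closedBall_le hd_ge
    (by positivity) (prod_nonneg fun z _ ↦ (inv_pos.2 (meanWeight_pos z)).le) measureReal_nonneg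
    ?_ hvol
  rw [prod_inv_meanWeight_sq hcard]
  exact pi_pow_mul_factorial_le hn hd
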